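/- Let M be a g-module admitting a finite chain 0 = M_0 ⊆ M_1 ⊆ ⋯ ⊆ M_r = M of g-submodules such that each quotient g-module M_i/M_{i-1} is good. Then M is good, i.e., M = U_{≤n}·V for some n ≥ 0 and some finite-dimensional subspace V of M. -/

import Mathlib

/-!
The heart of the matter is that an extension of good modules is good. Let `L → N → P` be such an
extension, with `L = U_{≤m}·V`, `P = U_{≤n}·W` and `W'` a finite-dimensional lift of `W` to `N`.
Since homomorphisms commute with `U_{≤n}`, the space `U_{≤n}·W'` maps onto `P`, while `U_{≤m}·V`
maps onto the kernel of `N → P`; hence `N = U_{≤max(m,n)}·(V + W')`, where `V` stands for its image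
in `N`. The theorem follows by induction along the chain.
-/

/-- `Ule k g M V n` is `U_{≤n}·V`: the span of all `x₁ · (x₂ · (⋯(x_j · v)⋯))` with
`0 ≤ j ≤ n`, `xᵢ ∈ g`, `v ∈ V`. -/
def Ule (k : Type*) [Field k] (g : Type*) [LieRing g] [LieAlgebra k g]
    (M : Type*) [AddCommGroup M] [Module k M] [LieRingModule g M] [LieModule k g M]
    (V : Submodule k M) : ℕ → Submodule k M
  | 0 => V
  | n + 1 => Ule k g M V n ⊔
      Submodule.span k {m : M | ∃ x : g, ∃ v ∈ Ule k g M V n, ⁅x, v⁆ = m}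

/-- A `g`-module `M` is good if `M = U_{≤n}·V` for some `n ≥ 0` and some finite-dimensional
subspace `V` of `M`. -/
def IsGood (k : Type*) [Field k] (g : Type*) [LieRing g] [LieAlgebra k g]
    (M : Type*) [AddCommGroup M] [Module k M] [LieRingModule g M] [LieModule k g M] : Prop :=
  ∃ (n : ℕ) (V : Submodule k M), FiniteDimensional k V ∧ Ule k g M V n = ⊤

section

variable {k : Type*} [Field k] {g : Type*} [LieRing g] [LieAlgebra k g]
  {L : Type*} [AddCommGroup L] [Module k L] [LieRingModule g L] [LieModule k g L]
  {N : Type*} [AddCommGroup N] [Module k N] [LieRingModule g N] [LieModule k g N]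
  {P : Type*} [AddCommGroup P] [Module k P] [LieRingModule g P] [LieModule k g P]

theorem Ule_mono_left {V W : Submodule k N} (h : V ≤ W) (n : ℕ) :
    Ule k g N V n ≤ Ule k g N W n := by
  induction n with
  | zero => exact h
  | succ n ih =>
    refine sup_le_sup ih (Submodule.span_mono ?_)
    rintro _ ⟨x, v, hv, rfl⟩
    exact ⟨x, v, ih hv, rfl⟩

theorem Ule_mono_right (V : Submodule k N) : Monotone (Ule k g N V) :=
  monotone_nat_of_le_succ fun _ => le_sup_left

theorem Ule_mono {V W : Submodule k N} (h : V ≤ W) {m n : ℕ} (hmn : m ≤ n) :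
    Ule k g N V m ≤ Ule k g N W n :=
  (Ule_mono_left h m).trans (Ule_mono_right W hmn)

theorem Ule_sup_Ule_le (V W : Submodule k N) (m n : ℕ) :
    Ule k g N V m ⊔ Ule k g N W n ≤ Ule k g N (V ⊔ W) (max m n) :=
  sup_le (Ule_mono le_sup_left (le_max_left m n)) (Ule_mono le_sup_right (le_max_right m n))

theorem map_Ule (f : N →ₗ⁅k,g⁆ P) (V : Submodule k N) (n : ℕ) :
    (Ule k g N V n).map (f : N →ₗ[k] P) = Ule k g P (V.map (f : N →ₗ[k] P)) n := by
  induction n with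
  | zero => rfl
  | succ n ih =>
    rw [Ule, Ule, Submodule.map_sup, Submodule.map_span, ← ih]
    congr 2
    ext y
    constructor
    · rintro ⟨_, ⟨x, v, hv, rfl⟩, rfl⟩
      exact ⟨x, f v, Submodule.mem_map_of_mem hv, (f.map_lie x v).symm⟩
    · rintro ⟨x, _, ⟨v, hv, rfl⟩, rfl⟩
      exact ⟨⁅x, v⁆, ⟨x, v, hv, rfl⟩, f.map_lie x v⟩

theorem Ule_map_eq_range {V : Submodule k N} {n : ℕ} (hV : Ule k g N V n = ⊤)
    (f : N →ₗ⁅k,g⁆ P) : Ule k g P (V.map (f : N →ₗ[k] P)) n = (f : N →ₗ[k] P).range := by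
  rw [← map_Ule, hV, Submodule.map_top]

theorem exists_finiteDimensional_map_eq {f : N →ₗ[k] P} (hf : Function.Surjective f)
    (V : Submodule k P) [FiniteDimensional k V] :
    ∃ W : Submodule k N, FiniteDimensional k W ∧ W.map f = V := by
  obtain ⟨s, hs⟩ := f.exists_rightInverse_of_surjective (LinearMap.range_eq_top.2 hf)
  exact ⟨V.map s, inferInstance, by rw [← Submodule.map_comp, hs, Submodule.map_id]⟩

theorem IsGood.of_subsingleton [Subsingleton N] : IsGood k g N :=
  ⟨0, ⊥, inferInstance, Subsingleton.elim _ _⟩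

theorem IsGood.of_surjective (h : IsGood k g N) {f : N →ₗ⁅k,g⁆ P} (hf : Function.Surjective f) :
    IsGood k g P := by
  obtain ⟨n, V, _, hV⟩ := h
  exact ⟨n, V.map (f : N →ₗ[k] P), inferInstance,
    (Ule_map_eq_range hV f).trans (LinearMap.range_eq_top.2 hf)⟩

theorem IsGood.of_ker_le_range (hL : IsGood k g L) (hP : IsGood k g P) {f : L →ₗ⁅k,g⁆ N}
    {p : N →ₗ⁅k,g⁆ P} (hp : Function.Surjective p) (hker : p.ker ≤ f.range) : IsGood k g N := by
  obtain ⟨m, V, _, hV⟩ := hL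
  obtain ⟨n, W, _, hW⟩ := hP
  obtain ⟨W', _, rfl⟩ := exists_finiteDimensional_map_eq (f := (p : N →ₗ[k] P)) hp W
  have hker_le : (p : N →ₗ[k] P).ker ≤ Ule k g N (V.map (f : L →ₗ[k] N)) m :=
    (Ule_map_eq_range hV f).symm ▸ hker
  have hsup : Ule k g N W' n ⊔ (p : N →ₗ[k] P).ker = ⊤ :=
    (LinearMap.map_eq_top_iff (LinearMap.range_eq_top.2 hp)).1 ((map_Ule p W' n).trans hW)
  refine ⟨max n m, W' ⊔ V.map (f : L →ₗ[k] N), inferInstance, top_le_iff.1 ?_⟩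
  calc ⊤ = Ule k g N W' n ⊔ (p : N →ₗ[k] P).ker := hsup.symm
    _ ≤ Ule k g N W' n ⊔ Ule k g N (V.map (f : L →ₗ[k] N)) m := sup_le_sup_left hker_le _
    _ ≤ Ule k g N (W' ⊔ V.map (f : L →ₗ[k] N)) (max n m) := Ule_sup_Ule_le _ _ _ _

theorem IsGood.of_quotient {A B : LieSubmodule k g N} (hAB : A ≤ B) (hA : IsGood k g A)
    (hBA : IsGood k g (B ⧸ A.comap B.incl)) : IsGood k g B := by
  refine hA.of_ker_le_range hBA (f := LieSubmodule.inclusion hAB)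
    (LieSubmodule.Quotient.surjective_mk' _) ?_
  rw [LieSubmodule.Quotient.mk'_ker]
  exact fun b hb => ⟨⟨b, hb⟩, rfl⟩

end

/-- If a `g`-module `M` has a finite chain `0 = M₀ ⊆ M₁ ⊆ ⋯ ⊆ M_r = M` of `g`-submodules whose
successive quotients are good, then `M` is good. -/
theorem isGood_of_chain {k : Type*} [Field k] {g : Type*} [LieRing g] [LieAlgebra k g]
    {M : Type*} [AddCommGroup M] [Module k M] [LieRingModule g M] [LieModule k g M]
    (r : ℕ) (c : Fin (r + 1) → LieSubmodule k g M)
    (h0 : c 0 = ⊥) (hr : c (Fin.last r) = ⊤)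
    (hmono : ∀ i : Fin r, c i.castSucc ≤ c i.succ)
    (hgood : ∀ i : Fin r,
      IsGood k g ((c i.succ : LieSubmodule k g M) ⧸
        LieSubmodule.comap (c i.succ).incl (c i.castSucc))) :
    IsGood k g M := by
  have isGood_c : ∀ i, IsGood k g (c i) := by
    intro i
    induction i using Fin.induction with
    | zero => rw [h0]; exact .of_subsingleton
    | succ i ih => exact ih.of_quotient (hmono i) (hgood i)
  refine (isGood_c (Fin.last r)).of_surjective (f := (c (Fin.last r)).incl) fun x => ?_
  exact ⟨⟨x, hr ▸ LieSubmodule.mem_top x⟩, rfl⟩
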